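/- If the map θ : (S a)^{W0} → (S p)^K (the restriction of the Reynolds operator of the K-module S p to the subspace (S a)^{W0}) is injective, then the restriction map ψ : (S p)^K → (S a)^{W0} is surjective. -/

import Mathlib

/-!
Restriction of polynomial functions from `p` to `a` and pullback along the Killing-orthogonal
projection `pr : p → a` are adjoint for suitable symmetric nondegenerate pairings, so surjectivity
of one follows from injectivity of the other on invariants.

The pairings live on the spaces `kerSpan b n` spanned by the functions `(1 + b(·, y)) ^ n`, where
`b` is the Killing form restricted to `p` or to `a`; they are characterised by the reproducing
property `⟨(1 + b(·, y)) ^ n, h⟩ = h y` (`exists_kerForm`). These spaces are finite-dimensional, and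
since the Killing form is nondegenerate on `a`, every polynomial function on `a` lies in one of them
(`exists_mem_kerSpan`). Restriction sends the kernel at `y ∈ p` to the kernel at `pr y`, and
pullback sends the kernel at `y ∈ a` to the kernel of `p` at `y`; adjointness follows.

Let `I` be the span of all differences of kernels at `y` and at `e y`, for `e ∈ K` and `y ∈ p`. By
the reproducing property the orthogonal complement of `I` consists of the `K`-invariants. The
group `K` preserves the Killing form (`killingForm_adjointGroup`), so `e` carries the kernel at `y`
to that at `e y`, and the Reynolds operator kills `I`. Let `U` be the restriction to `a` of the
`K`-invariants. If a `W₀`-invariant `q` is orthogonal to `U`, then `q ∘ pr` is orthogonal to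
`I^⊥`, hence lies in `I`, so `θ q = 0` and `q = 0`. Thus `U^⊥` meets the `W₀`-invariants trivially,
and comparing dimensions shows that `U` is the whole space of `W₀`-invariants
(`le_map_of_adjoint`).
-/


noncomputable section

variable (g : Type) [LieRing g] [LieAlgebra ℂ g]

/-- The exponential of a (nilpotent) endomorphism, as a finite sum `∑ fⁱ/i!`. -/
noncomputable def expNil (f : Module.End ℂ g) : Module.End ℂ g :=
  ∑ i ∈ Finset.range (Module.finrank ℂ g + 1), ((Nat.factorial i : ℂ)⁻¹) • f ^ i

/-- The adjoint group of the complex semisimple Lie algebra `g`: the subgroup of `GL(g)`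
generated by the exponentials of nilpotent inner derivations `ad x`.  (For `g` semisimple this
is the identity component of the automorphism group of `g`; all its elements are Lie algebra
automorphisms.) -/
def adjointGroup : Subgroup (g ≃ₗ[ℂ] g) :=
  Subgroup.closure {e : g ≃ₗ[ℂ] g | ∃ x : g,
    IsNilpotent ((LieAlgebra.ad ℂ g) x) ∧ (e : g →ₗ[ℂ] g) = expNil g ((LieAlgebra.ad ℂ g) x)}

variable (σ : g ≃ₗ[ℂ] g)

/-- `K = G^σ`, the fixed points of the involution induced by `σ` on the adjoint group
(an automorphism `e ∈ G` is fixed by the involution `e ↦ σ ∘ e ∘ σ⁻¹` iff it commutes with `σ`). -/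
def fixedSubgroup : Subgroup (g ≃ₗ[ℂ] g) :=
  adjointGroup g ⊓ Subgroup.centralizer {σ}

/-- `p`, the `-1` eigenspace of `σ`. -/
def pPart : Submodule ℂ g := Module.End.eigenspace (σ : g →ₗ[ℂ] g) (-1)

/-- The algebra of polynomial functions on a complex vector space: the subalgebra of functions
generated by the linear functionals. -/
def polyFun (V : Type) [AddCommGroup V] [Module ℂ V] : Subalgebra ℂ (V → ℂ) :=
  Algebra.adjoin ℂ (Set.range fun l : V →ₗ[ℂ] ℂ => (l : V → ℂ))

variable (a : LieSubalgebra ℂ g)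

/-- `K`-invariance of a function on `p` (for the action of `K = G^σ` on `p`). -/
def KInvFun (f : ↥(pPart g σ) → ℂ) : Prop :=
  ∀ e ∈ fixedSubgroup g σ, ∀ x x' : ↥(pPart g σ), e (x : g) = (x' : g) → f x' = f x

/-- `W₀`-invariance of a function on `a`, where the restricted Weyl group
`W₀ = N_K(a)/Z_K(a)` acts on `a` through `N_K(a)`. -/
def W0InvFun (q : ↥a → ℂ) : Prop :=
  ∀ e ∈ fixedSubgroup g σ, (∀ z ∈ a, e z ∈ a) →
    ∀ x x' : ↥a, e (x : g) = (x' : g) → q x' = q x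

/-! ### Spaces of polynomial functions spanned by powers of affine functions -/

section Kernel

variable {V : Type} [AddCommGroup V] [Module ℂ V]

/-- The reproducing kernel `x ↦ (1 + b(x, y)) ^ n` at the point `y`. -/
def kerFun (b : LinearMap.BilinForm ℂ V) (n : ℕ) (y : V) : V → ℂ :=
  fun x => (1 + b x y) ^ n

/-- The span of the kernel functions `(1 + b(·, y)) ^ n`. For `b` nondegenerate and `V`
finite-dimensional this is the space of polynomial functions of degree at most `n`. -/
def kerSpan (b : LinearMap.BilinForm ℂ V) (n : ℕ) : Submodule ℂ (V → ℂ) :=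
  Submodule.span ℂ (Set.range (kerFun b n))

lemma kerFun_mem (b : LinearMap.BilinForm ℂ V) (n : ℕ) (y : V) :
    kerFun b n y ∈ kerSpan b n :=
  Submodule.subset_span ⟨y, rfl⟩

lemma kerFun_symm {b : LinearMap.BilinForm ℂ V} (hb : b.IsSymm) (n : ℕ) (x y : V) :
    kerFun b n y x = kerFun b n x y := by
  simp [kerFun, hb.eq x y]

lemma kerFun_mem_polyFun (b : LinearMap.BilinForm ℂ V) (n : ℕ) (y : V) :
    kerFun b n y ∈ polyFun V := by
  have h : (b.flip y : V → ℂ) ∈ polyFun V := Algebra.subset_adjoin ⟨b.flip y, rfl⟩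
  exact (polyFun V).pow_mem ((polyFun V).add_mem (polyFun V).one_mem h) n

lemma kerSpan_le_polyFun (b : LinearMap.BilinForm ℂ V) (n : ℕ) :
    kerSpan b n ≤ Subalgebra.toSubmodule (polyFun V) := by
  rw [kerSpan, Submodule.span_le]
  rintro _ ⟨y, rfl⟩
  exact kerFun_mem_polyFun b n y

/-- `kerSpan b n` sits inside the `n`-th power of the finite-dimensional space of affine
functions. -/
lemma kerSpan_finiteDimensional [FiniteDimensional ℂ V] (b : LinearMap.BilinForm ℂ V) (n : ℕ) :
    FiniteDimensional ℂ (kerSpan b n) := by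
  let D : Submodule ℂ (V → ℂ) := Submodule.span ℂ {1} ⊔
    LinearMap.range (LinearMap.ltoFun ℂ V ℂ ℂ)
  have hD : D.FG := (Submodule.fg_span (Set.finite_singleton _)).sup (Module.Finite.iff_fg.mp
    inferInstance)
  have hDn : (D ^ n).FG := hD.pow n
  have : FiniteDimensional ℂ (D ^ n : Submodule ℂ (V → ℂ)) := Module.Finite.iff_fg.mpr hDn
  refine Submodule.finiteDimensional_of_le (S₂ := D ^ n) ?_
  rw [kerSpan, Submodule.span_le]
  rintro _ ⟨y, rfl⟩
  have h : (1 + (b.flip y : V → ℂ)) ∈ D :=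
    Submodule.add_mem_sup (Submodule.mem_span_singleton_self _) ⟨b.flip y, rfl⟩
  exact Submodule.pow_mem_pow D h n

/-- If a polynomial curve in a vector space stays in a subspace, then so do its coefficients. -/
lemma coeff_mem_of_curve_mem {E : Type} [AddCommGroup E] [Module ℂ E] (S : Submodule ℂ E)
    (N : ℕ) (v : ℕ → E)
    (h : ∀ t : ℂ, ∑ k ∈ Finset.range N, t ^ k • v k ∈ S) {k : ℕ} (hk : k < N) : v k ∈ S := by
  by_contra hv
  obtain ⟨φ, hφ, hφS⟩ := Submodule.exists_dual_map_eq_bot_of_notMem hv inferInstance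
  apply hφ
  have hz : (∑ k ∈ Finset.range N, Polynomial.monomial k (φ (v k)) : Polynomial ℂ) = 0 := by
    apply Polynomial.zero_of_eval_zero
    intro t
    have h0 : φ (∑ k ∈ Finset.range N, t ^ k • v k) ∈ S.map φ := Submodule.mem_map_of_mem (h t)
    rw [hφS, Submodule.mem_bot] at h0
    rw [Polynomial.eval_finsetSum, ← h0]
    simp [mul_comm]
  have := congrArg (fun p => Polynomial.coeff p k) hz
  simpa [Polynomial.finsetSum_coeff, Polynomial.coeff_monomial, hk] using this

/-- Multiplication by a linear functional raises the degree bound by one: the product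
`(1 + b(·, y)) ^ n * b(·, z)` is, up to a scalar, the coefficient of `t` in
`(1 + b(·, y + t z)) ^ (n + 1)`. -/
lemma kerFun_mul_mem (b : LinearMap.BilinForm ℂ V) (n : ℕ) (y z : V) :
    kerFun b n y * (b.flip z : V → ℂ) ∈ kerSpan b (n + 1) := by
  let v : ℕ → V → ℂ := fun k x =>
    ((n + 1).choose k : ℂ) * (1 + b x y) ^ (n + 1 - k) * (b x z) ^ k
  have hv : v 1 ∈ kerSpan b (n + 1) := by
    refine coeff_mem_of_curve_mem _ (n + 2) v (fun t => ?_) (by omega)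
    have : ∑ k ∈ Finset.range (n + 2), t ^ k • v k = kerFun b (n + 1) (y + t • z) := by
      funext x
      have e : (1 : ℂ) + b x (y + t • z) = t * b x z + (1 + b x y) := by simp; ring
      rw [kerFun, e, add_pow, Finset.sum_apply]
      refine Finset.sum_congr rfl fun k _ => ?_
      simp only [v, Pi.smul_apply, smul_eq_mul, mul_pow]
      ring
    rw [this]
    exact kerFun_mem _ _ _
  have hs : kerFun b n y * (b.flip z : V → ℂ) = ((n : ℂ) + 1)⁻¹ • v 1 := by
    funext x
    have hn : (n : ℂ) + 1 ≠ 0 := Nat.cast_add_one_ne_zero n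
    simp only [v, kerFun, Pi.mul_apply, Pi.smul_apply, smul_eq_mul]
    simp
    field_simp
  rw [hs]
  exact Submodule.smul_mem _ _ hv

lemma mul_mem_kerSpan (b : LinearMap.BilinForm ℂ V) (n : ℕ) (z : V) {f : V → ℂ}
    (hf : f ∈ kerSpan b n) : f * (b.flip z : V → ℂ) ∈ kerSpan b (n + 1) := by
  have : kerSpan b n ≤
      (kerSpan b (n + 1)).comap (LinearMap.mulRight ℂ (b.flip z : V → ℂ)) := by
    conv_lhs => rw [kerSpan]
    rw [Submodule.span_le]
    rintro _ ⟨y, rfl⟩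
    exact kerFun_mul_mem b n y z
  exact this hf

lemma kerSpan_le_succ (b : LinearMap.BilinForm ℂ V) (n : ℕ) :
    kerSpan b n ≤ kerSpan b (n + 1) := by
  conv_lhs => rw [kerSpan]
  rw [Submodule.span_le]
  rintro _ ⟨y, rfl⟩
  have : kerFun b n y = kerFun b (n + 1) y - kerFun b n y * (b.flip y : V → ℂ) := by
    funext x
    have e : b.flip y x = b x y := rfl
    simp only [kerFun, Pi.sub_apply, Pi.mul_apply, e]
    ring
  rw [SetLike.mem_coe, this]
  exact Submodule.sub_mem _ (kerFun_mem _ _ _) (kerFun_mul_mem b n y y)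

/-- When every linear functional has the form `b(·, y)`, the spaces `kerSpan b n` exhaust the
polynomial functions. -/
lemma exists_mem_kerSpan (b : LinearMap.BilinForm ℂ V)
    (hb : ∀ l : V →ₗ[ℂ] ℂ, ∃ y, b.flip y = l) {f : V → ℂ} (hf : f ∈ polyFun V) :
    ∃ n, f ∈ kerSpan b n := by
  have hmono : Monotone (kerSpan b) := monotone_nat_of_le_succ (kerSpan_le_succ b)
  -- The multipliers preserving the union of the `kerSpan b n` contain all linear functionals
  -- and are closed under the algebra operations.
  have key : ∀ n, ∀ h ∈ kerSpan b n, ∃ m, h * f ∈ kerSpan b m := by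
    induction hf using Algebra.adjoin_induction with
    | mem f hf =>
      obtain ⟨l, rfl⟩ := hf
      obtain ⟨y, rfl⟩ := hb l
      exact fun n h hh => ⟨n + 1, mul_mem_kerSpan b n y hh⟩
    | algebraMap c =>
      intro n h hh
      refine ⟨n, ?_⟩
      rw [mul_comm, ← Algebra.smul_def]
      exact Submodule.smul_mem _ _ hh
    | add f₁ f₂ _ _ h₁ h₂ =>
      intro n h hh
      obtain ⟨m₁, hm₁⟩ := h₁ n h hh
      obtain ⟨m₂, hm₂⟩ := h₂ n h hh
      refine ⟨max m₁ m₂, ?_⟩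
      rw [mul_add]
      exact Submodule.add_mem _ (hmono (le_max_left _ _) hm₁) (hmono (le_max_right _ _) hm₂)
    | mul f₁ f₂ _ _ h₁ h₂ =>
      intro n h hh
      obtain ⟨m₁, hm₁⟩ := h₁ n h hh
      rw [← mul_assoc]
      exact h₂ m₁ _ hm₁
  have h1 : (1 : V → ℂ) ∈ kerSpan b 0 := by
    have : kerFun b 0 0 = 1 := by funext x; simp [kerFun]
    exact this ▸ kerFun_mem b 0 0
  simpa using key 0 1 h1

/-- The form on `kerSpan b n` characterised by `⟨kerFun b n y, h⟩ = h y`. -/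
lemma exists_kerForm {b : LinearMap.BilinForm ℂ V} (hb : b.IsSymm) (n : ℕ) :
    ∃ B : LinearMap.BilinForm ℂ (kerSpan b n), B.IsSymm ∧ B.Nondegenerate ∧
      ∀ (y : V) (h : kerSpan b n), B ⟨kerFun b n y, kerFun_mem b n y⟩ h = h.1 y := by
  let T : (V →₀ ℂ) →ₗ[ℂ] (V → ℂ) := Finsupp.linearCombination ℂ (kerFun b n)
  let ev : (V → ℂ) →ₗ[ℂ] (V →₀ ℂ) →ₗ[ℂ] ℂ :=
    LinearMap.mk₂ ℂ (fun h c => Finsupp.linearCombination ℂ h c)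
      (fun h h' c => by simp [Finsupp.linearCombination_apply, Finsupp.sum, mul_add,
        Finset.sum_add_distrib])
      (fun r h c => by simp [Finsupp.linearCombination_apply, Finsupp.sum, Finset.mul_sum,
        mul_left_comm])
      (fun h c c' => by simp) (fun r h c => by simp)
  have ev_single (h : V → ℂ) (y : V) : ev h (Finsupp.single y 1) = h y := by simp [ev]
  have T_single (y : V) : T (Finsupp.single y 1) = kerFun b n y := by simp [T]
  have hsymm : ∀ c d, ev (T c) d = ev (T d) c := by
    have : ev ∘ₗ T = (ev ∘ₗ T).flip := by
      ext x y
      simp [ev, T, kerFun_symm hb n x y]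
    exact fun c d => LinearMap.congr_fun₂ this c d
  have hT : ∀ h : kerSpan b n, ∃ c, T c = h.1 := fun h => by
    have h2 : h.1 ∈ Submodule.span ℂ (Set.range (kerFun b n)) := h.2
    rwa [← Finsupp.range_linearCombination] at h2
  have hTm : ∀ c, T c ∈ kerSpan b n := fun c => by
    rw [kerSpan, ← Finsupp.range_linearCombination]
    exact ⟨c, rfl⟩
  obtain ⟨s, hs⟩ := LinearMap.exists_rightInverse_of_surjective (T.codRestrict _ hTm)
    (LinearMap.range_eq_top.mpr fun h => (hT h).imp fun c hc => Subtype.ext hc)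
  have hs' : ∀ h : kerSpan b n, T (s h) = h.1 := fun h =>
    congrArg Subtype.val (LinearMap.congr_fun hs h)
  let B : LinearMap.BilinForm ℂ (kerSpan b n) := ev.compl₁₂ (kerSpan b n).subtype s
  have hB : ∀ f h, B f h = ev (f.1) (s h) := fun _ _ => rfl
  have hBs : B.IsSymm := ⟨fun f h => by rw [hB, hB, ← hs' f, ← hs' h, hsymm]⟩
  have hBk : ∀ (y : V) (h : kerSpan b n),
      B ⟨kerFun b n y, kerFun_mem b n y⟩ h = h.1 y := fun y h => by
    change ev (kerFun b n y) (s h) = h.1 y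
    rw [← T_single, hsymm, hs', ev_single]
  refine ⟨B, hBs, ?_, hBk⟩
  have hsep : LinearMap.SeparatingRight B := fun h hh => by
    ext y
    simpa [hBk] using hh ⟨kerFun b n y, kerFun_mem b n y⟩
  exact (LinearMap.IsRefl.nondegenerate_iff_separatingRight hBs.isRefl).mpr hsep

end Kernel

/-! ### Duality -/

/-- Abstract form of the duality argument. With `r` and `s` adjoint, the vectors of `Inv`
orthogonal to `r (I^⊥)` are those sent by `s` into `I^⊥⊥ = I`; if only `0` is, then `r (I^⊥)`
has the dimension of `Inv`. -/
lemma le_map_of_adjoint {M N : Type} [AddCommGroup M] [Module ℂ M] [FiniteDimensional ℂ M]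
    [AddCommGroup N] [Module ℂ N] [FiniteDimensional ℂ N]
    {B : LinearMap.BilinForm ℂ M} {C : LinearMap.BilinForm ℂ N}
    (hB : B.IsSymm) (hBn : B.Nondegenerate) (hCn : C.Nondegenerate)
    (r : M →ₗ[ℂ] N) (s : N →ₗ[ℂ] M) (hrs : ∀ f q, C (r f) q = B f (s q))
    (I : Submodule ℂ M) (Inv : Submodule ℂ N) (hr : (B.orthogonal I).map r ≤ Inv)
    (hs : ∀ q ∈ Inv, s q ∈ I → q = 0) : Inv ≤ (B.orthogonal I).map r := by
  set U := (B.orthogonal I).map r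
  have hdisj : Disjoint Inv (C.orthogonal U) := by
    rw [Submodule.disjoint_def]
    intro q hq hqU
    refine hs q hq ?_
    rw [← LinearMap.BilinForm.orthogonal_orthogonal hBn hB.isRefl I]
    intro f hf
    have := hqU (r f) (Submodule.mem_map_of_mem hf)
    exact (hrs f q).symm.trans this
  have h1 := Submodule.finrank_add_finrank_le_of_disjoint hdisj
  have h2 := LinearMap.BilinForm.finrank_orthogonal hCn U
  have h3 := Submodule.finrank_le U
  exact (Submodule.eq_of_le_of_finrank_le hr (by omega)).ge

/-! ### Invariance of the Killing form under the adjoint group -/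

section Killing

variable {L : Type} [LieRing L] [LieAlgebra ℂ L]

lemma expNil_eq_exp [FiniteDimensional ℂ L] [Module ℚ (Module.End ℂ L)]
    {f : Module.End ℂ L} (hf : IsNilpotent f) :
    expNil L f = IsNilpotent.exp f := by
  have h0 : f ^ Module.finrank ℂ L = 0 := by
    have := f.aeval_self_charpoly
    rwa [IsNilpotent.charpoly_eq_X_pow_finrank hf, map_pow, Polynomial.aeval_X] at this
  rw [IsNilpotent.exp_eq_sum (k := Module.finrank ℂ L + 1) (by rw [pow_succ, h0, zero_mul]),
    expNil]
  refine Finset.sum_congr rfl fun i _ => ?_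
  rw [← Rat.cast_smul_eq_qsmul ℂ]
  simp

lemma killingForm_pow_ad (z x y : L) (i : ℕ) :
    killingForm ℂ L (((LieAlgebra.ad ℂ L z) ^ i) x) y =
      killingForm ℂ L x (((-LieAlgebra.ad ℂ L z) ^ i) y) := by
  induction i generalizing x y with
  | zero => simp
  | succ i ih =>
    rw [pow_succ, Module.End.mul_apply, ih, pow_succ', Module.End.mul_apply, LieAlgebra.ad_apply,
      LinearMap.neg_apply, LieAlgebra.ad_apply, map_neg]
    exact LieModule.traceForm_apply_lie_apply' ℂ L L z x _

/-- Elements of the adjoint group are isometries: `ad z` is skew for the Killing form, so the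
adjoint of `exp (ad z)` is `exp (-ad z)`. -/
lemma killingForm_adjointGroup [FiniteDimensional ℂ L] {e : L ≃ₗ[ℂ] L} (he : e ∈ adjointGroup L) (x y : L) :
    killingForm ℂ L (e x) (e y) = killingForm ℂ L x y := by
  induction he using Subgroup.closure_induction generalizing x y with
  | mem e he =>
    obtain ⟨z, hz, hez⟩ := he
    let : Module ℚ (Module.End ℂ L) := Module.compHom _ (algebraMap ℚ ℂ)
    have hex : ∀ w, e w = expNil L (LieAlgebra.ad ℂ L z) w := fun w => LinearMap.congr_fun hez w
    have hadj : ∀ u w, killingForm ℂ L (expNil L (LieAlgebra.ad ℂ L z) u) w =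
        killingForm ℂ L u (expNil L (-LieAlgebra.ad ℂ L z) w) := fun u w => by
      simp [expNil, LinearMap.sum_apply, killingForm_pow_ad]
    rw [hex x, hex y, hadj, expNil_eq_exp hz, expNil_eq_exp hz.neg, ← Module.End.mul_apply,
      IsNilpotent.exp_neg_mul_exp_self hz, Module.End.one_apply]
  | one => rfl
  | mul e₁ e₂ _ _ h₁ h₂ => exact (h₁ _ _).trans (h₂ _ _)
  | inv e _ h =>
    have := h (e⁻¹ x) (e⁻¹ y)
    have hinv : ∀ w, e (e⁻¹ w) = w := e.apply_symm_apply
    rw [← this, hinv, hinv]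

end Killing

/-! ### Surjectivity of the restriction map -/

/-- **Lemma 1.1.**  Identify `S p` with the polynomial functions `ℂ[p]` and `S a` with `ℂ[a]`
via the Killing form, let `Rey` be the Reynolds operator of the `K`-module `S p`
(the `K`-equivariant projection onto `(S p)^K` along the sum `(S p)_K` of all nontrivial
`K`-submodules), and let `θ : (S a)^{W₀} → (S p)^K` be its restriction to `(S a)^{W₀}`,
where `S a ⊆ S p` via the Killing-orthogonal projection `pr : p → a`.
If `θ` is injective, then the restriction map `ψ : (S p)^K → (S a)^{W₀}` is surjective. -/
theorem theta_injective_implies_psi_surjective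
    [FiniteDimensional ℂ g] [LieAlgebra.IsSemisimple ℂ g]
    (hσLie : ∀ x y : g, σ ⁅x, y⁆ = ⁅σ x, σ y⁆)
    (hσinvol : ∀ x : g, σ (σ x) = x)
    (hσne : σ ≠ LinearEquiv.refl ℂ g)
    (hap : ∀ x ∈ a, x ∈ pPart g σ)
    (habelian : ∀ x ∈ a, ∀ y ∈ a, ⁅x, y⁆ = (0 : g))
    (hdiag : ∀ x ∈ a, ((LieAlgebra.ad ℂ g) x).IsSemisimple)
    (hmax : ∀ a' : LieSubalgebra ℂ g, (∀ x ∈ a', x ∈ pPart g σ) →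
      (∀ x ∈ a', ∀ y ∈ a', ⁅x, y⁆ = (0 : g)) →
      (∀ x ∈ a', ((LieAlgebra.ad ℂ g) x).IsSemisimple) → a ≤ a' → a' = a)
    -- the Killing-orthogonal projection `p → a` realizing `S a` as a subspace of `S p`:
    (pr : ↥(pPart g σ) →ₗ[ℂ] ↥a)
    (hpr : ∀ (x : ↥(pPart g σ)) (y : ↥a), (x : g) = (y : g) → pr x = y)
    (hprKer : ∀ x : ↥(pPart g σ), pr x = 0 ↔ ∀ y ∈ a, killingForm ℂ g (x : g) y = 0)
    -- the Reynolds operator of the `K`-module `S p = ℂ[p]`: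
    (Rey : (↥(pPart g σ) → ℂ) →ₗ[ℂ] (↥(pPart g σ) → ℂ))
    (hReyPoly : ∀ f ∈ polyFun ↥(pPart g σ), Rey f ∈ polyFun ↥(pPart g σ))
    (hReyInto : ∀ f ∈ polyFun ↥(pPart g σ), KInvFun g σ (Rey f))
    (hReyId : ∀ f ∈ polyFun ↥(pPart g σ), KInvFun g σ f → Rey f = f)
    (hReyEquiv : ∀ e ∈ fixedSubgroup g σ, ∀ f f' : ↥(pPart g σ) → ℂ,
      f ∈ polyFun ↥(pPart g σ) → f' ∈ polyFun ↥(pPart g σ) →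
      (∀ x x' : ↥(pPart g σ), e (x : g) = (x' : g) → f' x' = f x) → Rey f' = Rey f)
    -- hypothesis: `θ = Rey ∘ (pullback along pr)` is injective on `(S a)^{W₀}`:
    (hθinj : ∀ q : ↥a → ℂ, q ∈ polyFun ↥a → W0InvFun g σ a q →
      Rey (fun x => q (pr x)) = 0 → q = 0) :
    -- conclusion: `ψ` is surjective:
    ∀ q : ↥a → ℂ, q ∈ polyFun ↥a → W0InvFun g σ a q →
      ∃ f : ↥(pPart g σ) → ℂ, f ∈ polyFun ↥(pPart g σ) ∧ KInvFun g σ f ∧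
        ∀ x : ↥a, f ⟨(x : g), hap x x.2⟩ = q x := by
  intro q hq hqW
  let bp : LinearMap.BilinForm ℂ (pPart g σ) :=
    (killingForm ℂ g).compl₁₂ (pPart g σ).subtype (pPart g σ).subtype
  let ba : LinearMap.BilinForm ℂ a :=
    (killingForm ℂ g).compl₁₂ a.toSubmodule.subtype a.toSubmodule.subtype
  have hbp : bp.IsSymm := ⟨fun x y => LieModule.traceForm_comm ℂ g g _ _⟩
  have hba : ba.IsSymm := ⟨fun x y => LieModule.traceForm_comm ℂ g g _ _⟩
  let i : a → pPart g σ := fun x => ⟨x, hap x x.2⟩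
  have hpri : ∀ y : a, pr (i y) = y := fun y => hpr (i y) y rfl
  have hadj : ∀ (x : pPart g σ) (y : a), bp x (i y) = ba (pr x) y := fun x y => by
    have h0 : pr (x - i (pr x)) = 0 := by rw [map_sub, hpri, sub_self]
    have h1 := (hprKer _).mp h0 y y.2
    rw [Submodule.coe_sub, map_sub, LinearMap.sub_apply, sub_eq_zero] at h1
    exact h1
  -- The Killing form is nondegenerate on `a`, since `pr` is the identity there and kills `a^⊥`.
  have hbaDual : ∀ l : a →ₗ[ℂ] ℂ, ∃ y, ba.flip y = l := by
    have hinj : Function.Injective ba.flip := by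
      rw [← LinearMap.ker_eq_bot, LinearMap.ker_eq_bot']
      intro y hy
      rw [← hpri y, hprKer]
      intro z hz
      exact (hba.eq y ⟨z, hz⟩).trans (LinearMap.congr_fun hy ⟨z, hz⟩)
    exact (LinearMap.injective_iff_surjective_of_finrank_eq_finrank
      (Subspace.dual_finrank_eq (K := ℂ) (V := a)).symm).mp hinj
  obtain ⟨n, hqn⟩ := exists_mem_kerSpan ba hbaDual hq
  have := kerSpan_finiteDimensional bp n
  have := kerSpan_finiteDimensional ba n
  obtain ⟨B, hBs, hBn, hBk⟩ := exists_kerForm hbp n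
  obtain ⟨C, hCs, hCn, hCk⟩ := exists_kerForm hba n
  have hrker : ∀ y, (kerFun bp n y) ∘ i = kerFun ba n (pr y) := fun y => by
    funext x
    have : bp (i x) y = ba x (pr y) := by rw [hbp.eq, hadj, hba.eq]
    simp [kerFun, this]
  have hsker : ∀ y, (kerFun ba n y) ∘ pr = kerFun bp n (i y) := fun y => by
    funext x
    simp [kerFun, hadj]
  have hrmem : ∀ f ∈ kerSpan bp n, LinearMap.funLeft ℂ ℂ i f ∈ kerSpan ba n := by
    have : kerSpan bp n ≤ (kerSpan ba n).comap (LinearMap.funLeft ℂ ℂ i) := by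
      conv_lhs => rw [kerSpan]
      rw [Submodule.span_le]
      rintro _ ⟨y, rfl⟩
      have := kerFun_mem ba n (pr y)
      rwa [← hrker] at this
    exact this
  have hsmem : ∀ f ∈ kerSpan ba n, LinearMap.funLeft ℂ ℂ pr f ∈ kerSpan bp n := by
    have : kerSpan ba n ≤ (kerSpan bp n).comap (LinearMap.funLeft ℂ ℂ pr) := by
      conv_lhs => rw [kerSpan]
      rw [Submodule.span_le]
      rintro _ ⟨y, rfl⟩
      have := kerFun_mem bp n (i y)
      rwa [← hsker] at this
    exact this
  let r : kerSpan bp n →ₗ[ℂ] kerSpan ba n := (LinearMap.funLeft ℂ ℂ i).restrict hrmem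
  let s : kerSpan ba n →ₗ[ℂ] kerSpan bp n := (LinearMap.funLeft ℂ ℂ pr).restrict hsmem
  -- Adjointness of restriction and pullback; by linearity in `q` it suffices to test kernels.
  have hrs : ∀ f q, C (r f) q = B f (s q) := by
    rintro f ⟨q, hq⟩
    induction hq using Submodule.span_induction with
    | mem _ h =>
      obtain ⟨y, rfl⟩ := h
      have hsy : s ⟨kerFun ba n y, kerFun_mem ba n y⟩ =
          ⟨kerFun bp n (i y), kerFun_mem bp n (i y)⟩ := Subtype.ext (hsker y)
      rw [hsy, hCs.eq, hBs.eq, hCk, hBk]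
      rfl
    | zero => exact ((C (r f)).map_zero).trans (by rw [← (B f ∘ₗ s).map_zero]; rfl)
    | add u v hu hv h₁ h₂ =>
      have e : (⟨u + v, Submodule.add_mem _ hu hv⟩ : kerSpan ba n) = ⟨u, hu⟩ + ⟨v, hv⟩ := rfl
      exact (congrArg (C (r f)) e).trans (by
        rw [map_add, h₁, h₂, ← map_add, ← map_add]; rfl)
    | smul c u hu h₁ =>
      have e : (⟨c • u, Submodule.smul_mem _ c hu⟩ : kerSpan ba n) = c • ⟨u, hu⟩ := rfl
      exact (congrArg (C (r f)) e).trans (by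
        rw [map_smul, h₁, ← map_smul, ← map_smul]; rfl)
  -- The span of the differences `e • κ_y - κ_y`; its orthogonal complement is the space of
  -- invariants, and it is contained in the kernel of the Reynolds operator.
  let κ : pPart g σ → kerSpan bp n := fun y => ⟨kerFun bp n y, kerFun_mem bp n y⟩
  let I : Submodule ℂ (kerSpan bp n) := Submodule.span ℂ
    {d | ∃ e ∈ fixedSubgroup g σ, ∃ y y' : pPart g σ, e (y : g) = y' ∧ d = κ y' - κ y}
  have hIorth : ∀ f ∈ B.orthogonal I, KInvFun g σ f.1 := by
    intro f hf e he x x' hx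
    have h := hf (κ x' - κ x) (Submodule.subset_span ⟨e, he, x, x', hx, rfl⟩)
    have h' : B (κ x' - κ x) f = 0 := h
    rw [map_sub, LinearMap.sub_apply, hBk, hBk, sub_eq_zero] at h'
    exact h'
  have hIRey : ∀ d ∈ I, Rey d.1 = 0 := by
    have : I ≤ LinearMap.ker (Rey ∘ₗ (kerSpan bp n).subtype) := by
      rw [Submodule.span_le]
      rintro _ ⟨e, he, y, y', hy, rfl⟩
      have hE : Rey (kerFun bp n y') = Rey (kerFun bp n y) := by
        refine hReyEquiv e he _ _ (kerFun_mem_polyFun _ _ _) (kerFun_mem_polyFun _ _ _) ?_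
        intro x x' hx
        have hk : bp x' y' = bp x y := by
          change killingForm ℂ g (x' : g) (y' : g) = killingForm ℂ g (x : g) (y : g)
          rw [← hx, ← hy, killingForm_adjointGroup he.1]
        simp [kerFun, hk]
      simp [κ, hE]
    exact fun d hd => this hd
  let Inv : Submodule ℂ (kerSpan ba n) :=
    { carrier := {h | W0InvFun g σ a h.1}
      zero_mem' := fun _ _ _ _ _ _ => rfl
      add_mem' := fun hu hv e he hea x x' hx =>
        congrArg₂ (· + ·) (hu e he hea x x' hx) (hv e he hea x x' hx)
      smul_mem' := fun c _ hu e he hea x x' hx => congrArg (c * ·) (hu e he hea x x' hx) }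
  have hle : Inv ≤ (B.orthogonal I).map r := by
    refine le_map_of_adjoint hBs hBn hCn r s hrs I Inv ?_ ?_
    · rintro _ ⟨f, hf, rfl⟩ e he _ x x' hx
      exact hIorth f hf e he (i x) (i x') hx
    · intro h hh hsI
      exact Subtype.ext (hθinj h.1 (kerSpan_le_polyFun ba n h.2) hh (hIRey _ hsI))
  obtain ⟨f, hf, hfq⟩ := hle (show (⟨q, hqn⟩ : kerSpan ba n) ∈ Inv from hqW)
  exact ⟨f.1, kerSpan_le_polyFun bp n f.2, hIorth f hf,
    fun x => congrFun (congrArg Subtype.val hfq) x⟩
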